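/- arXiv:2409.18063 — 5 statements merged into one kernel-verified Lean document; each statement's English description precedes it below -/
import Mathlib

section
/- Let X be a finite type of variables, let R be a binary relation on integer valuations X → ℤ, and let r ∈ MvPolynomial X ℚ be a polynomial with rational coefficients. Suppose (i) for all x, y : X → ℤ with R x y, we have r(y) ≤ r(x) and 0 ≤ r(x) (evaluating r at integer points, with integers cast into ℚ), and (ii) the restricted relation R' defined by R' x y ↔ (R x y ∧ r(x) = r(y)) has no infinite execution. Then R has no infinite execution. -/
theorem exists_denominator {X : Type*} (r : MvPolynomial X ℚ) :
    ∃ d : ℕ, 0 < d ∧ ∀ x : X → ℤ, ∃ z : ℤ,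
      (d : ℚ) * MvPolynomial.aeval (fun i => (x i : ℚ)) r = z := by
  induction r using MvPolynomial.induction_on with
  | C a =>
    refine ⟨a.den, a.den_pos, fun x => ⟨a.num, ?_⟩⟩
    simp [Rat.den_mul_eq_num]
  | add p q hp hq =>
    obtain ⟨d, hd, hp⟩ := hp
    obtain ⟨e, he, hq⟩ := hq
    refine ⟨d * e, Nat.mul_pos hd he, fun x => ?_⟩
    obtain ⟨a, ha⟩ := hp x
    obtain ⟨b, hb⟩ := hq x
    refine ⟨e * a + d * b, ?_⟩
    rw [map_add]
    push_cast
    rw [← ha, ← hb]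
    ring
  | mul_X p n hp =>
    obtain ⟨d, hd, hp⟩ := hp
    refine ⟨d, hd, fun x => ?_⟩
    obtain ⟨a, ha⟩ := hp x
    refine ⟨a * x n, ?_⟩
    rw [map_mul, MvPolynomial.aeval_X]
    push_cast
    rw [← ha]
    ring

/-- Lemma 2: a quasi-ranking function whose level sets cut the relation down to
a terminating relation certifies termination over ℤ. -/
theorem quasi_rf_implies_termination_over_Z
    {X : Type*} [Fintype X]
    (R : (X → ℤ) → (X → ℤ) → Prop)
    (r : MvPolynomial X ℚ)
    (hq : ∀ x y : X → ℤ, R x y →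
      MvPolynomial.aeval (fun i => (y i : ℚ)) r ≤ MvPolynomial.aeval (fun i => (x i : ℚ)) r ∧
      0 ≤ MvPolynomial.aeval (fun i => (x i : ℚ)) r)
    (hres : ¬ ∃ v : ℕ → (X → ℤ), ∀ i : ℕ,
      R (v i) (v (i + 1)) ∧
      MvPolynomial.aeval (fun j => ((v i) j : ℚ)) r =
        MvPolynomial.aeval (fun j => ((v (i + 1)) j : ℚ)) r) :
    ¬ ∃ v : ℕ → (X → ℤ), ∀ i : ℕ, R (v i) (v (i + 1)) := by
  rintro ⟨v, hv⟩
  obtain ⟨d, hd, hz⟩ := exists_denominator r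
  have hd' : (0 : ℚ) < d := by exact_mod_cast hd
  choose z hz using hz
  have hmono : ∀ i, z (v (i + 1)) ≤ z (v i) := by
    intro i
    have h : (z (v (i + 1)) : ℚ) ≤ z (v i) := by
      rw [← hz, ← hz]
      exact mul_le_mul_of_nonneg_left (hq _ _ (hv i)).1 hd'.le
    exact_mod_cast h
  have hnonneg : ∀ i, 0 ≤ z (v i) := by
    intro i
    have h : (0 : ℚ) ≤ z (v i) := by
      rw [← hz]
      exact mul_nonneg hd'.le (hq _ _ (hv i)).2
    exact_mod_cast h
  have hanti : Antitone (fun i => (z (v i)).toNat) :=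
    antitone_nat_of_succ_le fun i => Int.toNat_le_toNat (hmono i)
  obtain ⟨n, hmin⟩ : ∃ n, ∀ m, (z (v n)).toNat ≤ (z (v m)).toNat :=
    ⟨_, fun m => Function.argmin_le (fun i => (z (v i)).toNat) m⟩
  have hn : ∀ m, n ≤ m → (z (v n)).toNat = (z (v m)).toNat :=
    fun m hm => le_antisymm (hmin m) (hanti hm)
  apply hres
  refine ⟨fun i => v (n + i), fun i => ⟨hv (n + i), ?_⟩⟩
  have h1 : (z (v n)).toNat = (z (v (n + i))).toNat := hn (n + i) (by omega)
  have h2 : (z (v n)).toNat = (z (v (n + (i + 1)))).toNat := hn (n + (i + 1)) (by omega)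
  have h3 : z (v (n + i)) = z (v (n + (i + 1))) := by
    have := hnonneg (n + i)
    have := hnonneg (n + (i + 1))
    omega
  apply mul_left_cancel₀ hd'.ne'
  rw [hz, hz, h3]
end

section
/- Let X be a finite type of variables, let R be a binary relation on integer valuations X → ℤ, let n : ℕ, and let r : Fin n → MvPolynomial X ℚ be a sequence of polynomials with rational coefficients. Suppose (i) for every i : Fin n and all x, y : X → ℤ, if R x y and rⱼ(x) = rⱼ(y) for all j < i, then rᵢ(y) ≤ rᵢ(x) and 0 ≤ rᵢ(x) (evaluating at integer points cast into ℚ); and (ii) there are no x, y : X → ℤ with R x y and rᵢ(x) = rᵢ(y) for all i : Fin n. Then R has no infinite execution, i.e., there is no sequence v : ℕ → (X → ℤ) with R (v i) (v (i+1)) for all i. -/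
lemma denom_bound {X : Type*} (p : MvPolynomial X ℚ) :
    ∃ d : ℕ, 0 < d ∧ ∀ x : X → ℤ, ∃ z : ℤ,
      (d : ℚ) * MvPolynomial.aeval (fun k => (x k : ℚ)) p = z := by
  induction p using MvPolynomial.induction_on with
  | C a =>
    refine ⟨a.den, a.den_pos, fun x => ⟨a.num, ?_⟩⟩
    simp [Rat.den_mul_eq_num]
  | add p q hp hq =>
    obtain ⟨d, hd, h⟩ := hp
    obtain ⟨e, he, h'⟩ := hq
    refine ⟨d * e, Nat.mul_pos hd he, fun x => ?_⟩
    obtain ⟨z, hz⟩ := h x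
    obtain ⟨w, hw⟩ := h' x
    refine ⟨e * z + d * w, ?_⟩
    rw [map_add]
    push_cast
    rw [← hz, ← hw]
    ring
  | mul_X p i hp =>
    obtain ⟨d, hd, h⟩ := hp
    refine ⟨d, hd, fun x => ?_⟩
    obtain ⟨z, hz⟩ := h x
    refine ⟨z * x i, ?_⟩
    rw [map_mul, MvPolynomial.aeval_X]
    push_cast
    rw [← hz]
    ring

lemma eventually_const (a : ℕ → ℚ) (d : ℕ) (hd : 0 < d)
    (hz : ∀ k, ∃ z : ℤ, (d : ℚ) * a k = z) (N : ℕ)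
    (h : ∀ k, N ≤ k → a (k + 1) ≤ a k ∧ 0 ≤ a k) :
    ∃ M, ∀ k, M ≤ k → a k = a (k + 1) := by
  choose z hz using hz
  have hd' : (0 : ℚ) < d := by exact_mod_cast hd
  have hz0 : ∀ k, N ≤ k → 0 ≤ z k := by
    intro k hk
    have : (0 : ℚ) ≤ z k := by rw [← hz]; exact mul_nonneg hd'.le (h k hk).2
    exact_mod_cast this
  have hz1 : ∀ k, N ≤ k → z (k + 1) ≤ z k := by
    intro k hk
    have : (z (k + 1) : ℚ) ≤ z k := by
      rw [← hz, ← hz]; exact mul_le_mul_of_nonneg_left (h k hk).1 hd'.le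
    exact_mod_cast this
  obtain ⟨m, hm⟩ : ∃ m, ∀ k, (z (N + m)).toNat ≤ (z (N + k)).toNat :=
    ⟨Function.argmin (fun k => (z (N + k)).toNat),
      fun k => Function.argmin_le (fun k => (z (N + k)).toNat) k⟩
  have hle : ∀ k, z (N + m + k) ≤ z (N + m) := by
    intro k
    induction k with
    | zero => simp
    | succ k ih => exact (hz1 (N + m + k) (by omega)).trans ih
  have heq : ∀ k, z (N + m + k) = z (N + m) := by
    intro k
    have h1 := hm (m + k)
    have h2 := hle k
    have h3 := hz0 (N + m + k) (by omega)
    rw [← add_assoc] at h1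
    omega
  refine ⟨N + m, fun k hk => ?_⟩
  obtain ⟨t, rfl⟩ := Nat.exists_eq_add_of_le hk
  apply mul_left_cancel₀ hd'.ne'
  rw [hz, hz, heq, add_assoc (N + m), heq]


/-- Lemma 3: a weak lexicographic polynomial ranking function implies
termination over ℤ. -/
theorem wlprf_implies_termination_over_Z
    {X : Type*} [Fintype X]
    (R : (X → ℤ) → (X → ℤ) → Prop)
    (n : ℕ)
    (r : Fin n → MvPolynomial X ℚ)
    (hquasi : ∀ i : Fin n, ∀ x y : X → ℤ, R x y →
      (∀ j : Fin n, j < i →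
        MvPolynomial.aeval (fun k => (x k : ℚ)) (r j) =
          MvPolynomial.aeval (fun k => (y k : ℚ)) (r j)) →
      MvPolynomial.aeval (fun k => (y k : ℚ)) (r i) ≤
        MvPolynomial.aeval (fun k => (x k : ℚ)) (r i) ∧
      0 ≤ MvPolynomial.aeval (fun k => (x k : ℚ)) (r i))
    (hcover : ¬ ∃ x y : X → ℤ, R x y ∧ ∀ i : Fin n,
      MvPolynomial.aeval (fun k => (x k : ℚ)) (r i) =
        MvPolynomial.aeval (fun k => (y k : ℚ)) (r i)) :
    ¬ ∃ v : ℕ → (X → ℤ), ∀ i : ℕ, R (v i) (v (i + 1)) := by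
  rintro ⟨v, hv⟩
  have key : ∀ m : ℕ, ∃ N, ∀ k, N ≤ k → ∀ j : Fin n, (j : ℕ) < m →
      MvPolynomial.aeval (fun i => (v k i : ℚ)) (r j) =
        MvPolynomial.aeval (fun i => (v (k + 1) i : ℚ)) (r j) := by
    intro m
    induction m with
    | zero => exact ⟨0, fun k _ j hj => absurd hj (Nat.not_lt_zero _)⟩
    | succ m ih =>
      obtain ⟨N, hN⟩ := ih
      by_cases hm : m < n
      · obtain ⟨d, hd, hz⟩ := denom_bound (r ⟨m, hm⟩)
        obtain ⟨M, hM⟩ := eventually_const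
          (fun k => MvPolynomial.aeval (fun i => (v k i : ℚ)) (r ⟨m, hm⟩)) d hd
          (fun k => hz (v k)) N
          (fun k hk => hquasi ⟨m, hm⟩ (v k) (v (k + 1)) (hv k)
            (fun j hj => hN k hk j hj))
        refine ⟨max N M, fun k hk j hj => ?_⟩
        rcases Nat.lt_succ_iff_lt_or_eq.mp hj with hlt | heq
        · exact hN k (le_trans (le_max_left _ _) hk) j hlt
        · have : j = ⟨m, hm⟩ := Fin.ext heq
          subst this
          exact hM k (le_trans (le_max_right _ _) hk)
      · exact ⟨N, fun k hk j _ => hN k hk j (by omega)⟩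
  obtain ⟨N, hN⟩ := key n
  exact hcover ⟨v N, v (N + 1), hv N, fun i => hN N le_rfl i i.2⟩
end

section
/- Define the binary relation T on ℝ × ℝ by T (n, z) (n', z') ↔ (0 ≤ z ∧ 2 ≤ n ∧ n' = 2·n ∧ z' ≤ z ∧ n·z' = n·z − 1). Then: (i) for every transition, z strictly decreases, i.e., T (n,z) (n',z') implies z' < z (in particular there is no transition of T with z' = z, and z is nonnegative and non-increasing along all transitions); and yet (ii) T has an infinite execution: there exists f : ℕ → ℝ × ℝ with T (f i) (f (i+1)) for all i ∈ ℕ (for instance f i = (2^{i+1}, 2^{−i})). -/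
/-- The paper's nonlinear counterexample transition relation over the reals:
state is a pair (n, z). -/
def counterT : ℝ × ℝ → ℝ × ℝ → Prop := fun p q =>
  0 ≤ p.2 ∧ 2 ≤ p.1 ∧ q.1 = 2 * p.1 ∧ q.2 ≤ p.2 ∧ p.1 * q.2 = p.1 * p.2 - 1

/-- z strictly decreases along every transition of `counterT` (so `counterT`
restricted to z' = z is empty, and z is nonnegative and non-increasing), and yet
`counterT` admits an infinite execution. -/
theorem counterexample_weak_lex_over_reals :
    (∀ p q : ℝ × ℝ, counterT p q → q.2 < p.2) ∧
    (∃ f : ℕ → ℝ × ℝ, ∀ i : ℕ, counterT (f i) (f (i + 1))) := by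
  constructor
  · rintro ⟨n, z⟩ ⟨n', z'⟩ ⟨_, h2, _, _, h5⟩
    simp only at *
    by_contra h
    push Not at h
    nlinarith [mul_le_mul_of_nonneg_left h (by linarith : (0 : ℝ) ≤ n)]
  · refine ⟨fun i => (2 ^ (i + 1), (1 / 2) ^ i), fun i => ?_⟩
    have h1 : (1 : ℝ) ≤ 2 ^ i := one_le_pow₀ (by norm_num)
    have h2 : (0 : ℝ) ≤ (1 / 2) ^ i := by positivity
    have h3 : (2 : ℝ) ^ i * (1 / 2) ^ i = 1 := by
      rw [← mul_pow]; norm_num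
    refine ⟨h2, ?_, ?_, ?_, ?_⟩
    · show (2 : ℝ) ≤ 2 ^ (i + 1)
      rw [pow_succ]; linarith
    · show (2 : ℝ) ^ (i + 1 + 1) = 2 * 2 ^ (i + 1)
      ring
    · show ((1 : ℝ) / 2) ^ (i + 1) ≤ (1 / 2) ^ i
      rw [pow_succ]; linarith
    · show (2 : ℝ) ^ (i + 1) * (1 / 2) ^ (i + 1) = 2 ^ (i + 1) * (1 / 2) ^ i - 1
      rw [pow_succ, pow_succ]; linear_combination (-1 : ℝ) * h3
end

section
/- Let X be a finite type of variables and R a binary relation on integer valuations X → ℤ. Let N : ℕ and let P : Fin N → Finset (MvPolynomial X ℚ) be finite sets of polynomials. Define a sequence of relations by R₀ = R and R_{k+1} x y ↔ (R_k x y ∧ ∀ p ∈ P k, p(x) = p(y)) (evaluating at integer points cast into ℚ). Suppose that for each k < N, every p ∈ P k satisfies: for all x, y with R_k x y, p(y) ≤ p(x) and 0 ≤ p(x); and suppose the final relation R_N is empty (there are no x, y with R_N x y). Then R has no infinite execution: there is no sequence f : ℕ → (X → ℤ) with R (f i) (f (i+1)) for all i. -/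
lemma lex_denominator {X : Type*} (p : MvPolynomial X ℚ) :
    ∃ d : ℕ, 0 < d ∧ ∀ x : X → ℤ, ∃ z : ℤ,
      (d : ℚ) * MvPolynomial.aeval (fun i => (x i : ℚ)) p = z := by
  induction p using MvPolynomial.induction_on with
  | C a =>
    refine ⟨a.den, a.den_pos, fun x => ⟨a.num, ?_⟩⟩
    simp [Rat.den_mul_eq_num]
  | add p q hp hq =>
    obtain ⟨d, hd, h⟩ := hp
    obtain ⟨e, he, h'⟩ := hq
    refine ⟨d * e, Nat.mul_pos hd he, fun x => ?_⟩
    obtain ⟨z, hz⟩ := h x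
    obtain ⟨w, hw⟩ := h' x
    refine ⟨e * z + d * w, ?_⟩
    push_cast
    rw [map_add, ← hz, ← hw]
    ring
  | mul_X p i hp =>
    obtain ⟨d, hd, h⟩ := hp
    refine ⟨d, hd, fun x => ?_⟩
    obtain ⟨z, hz⟩ := h x
    refine ⟨z * x i, ?_⟩
    push_cast
    rw [map_mul, MvPolynomial.aeval_X, ← hz]
    ring

lemma lex_stabilize (g : ℕ → ℚ) (d : ℕ) (hd : 0 < d)
    (hz : ∀ i, ∃ z : ℤ, (d : ℚ) * g i = z)
    (n : ℕ) (hg : ∀ i, n ≤ i → g (i + 1) ≤ g i ∧ 0 ≤ g i) :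
    ∃ m, ∀ i, m ≤ i → g i = g (i + 1) := by
  choose z hz using hz
  have hd' : (0 : ℚ) < d := by exact_mod_cast hd
  have h0 : ∀ i, n ≤ i → 0 ≤ z i := by
    intro i hi
    have : (0 : ℚ) ≤ z i := by
      rw [← hz]; exact mul_nonneg hd'.le (hg i hi).2
    exact_mod_cast this
  have h1 : ∀ i, n ≤ i → z (i + 1) ≤ z i := by
    intro i hi
    have : (z (i + 1) : ℚ) ≤ z i := by
      rw [← hz, ← hz]; exact mul_le_mul_of_nonneg_left (hg i hi).1 hd'.le
    exact_mod_cast this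
  obtain ⟨m, hm⟩ : ∃ m, ∀ j, (z (n + m)).toNat ≤ (z (n + j)).toNat :=
    ⟨Function.argmin (fun i => (z (n + i)).toNat),
      fun j => Function.argmin_le (fun i => (z (n + i)).toNat) j⟩
  have h2 : ∀ i, n + m ≤ i → z i = z (n + m) := by
    intro i hi
    induction i, hi using Nat.le_induction with
    | base => rfl
    | succ i hi ih =>
      have a := h1 i (by omega)
      have b := hm (i + 1 - n)
      rw [show n + (i + 1 - n) = i + 1 by omega] at b
      have c := h0 (i + 1) (by omega)
      omega
  refine ⟨n + m, fun i hi => ?_⟩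
  apply mul_left_cancel₀ hd'.ne'
  rw [hz, hz, h2 i hi, h2 (i + 1) (by omega)]


/-- Soundness of the lexicographic polynomial ranking algorithm: repeatedly
restricting the transition relation to transitions preserving all discovered
quasi-ranking functions, if the final relation is empty then the original
relation terminates over ℤ. -/
theorem lex_prf_algorithm_sound
    {X : Type*} [Fintype X]
    (R : (X → ℤ) → (X → ℤ) → Prop)
    (N : ℕ)
    (P : Fin N → Finset (MvPolynomial X ℚ))
    (Rk : ℕ → ((X → ℤ) → (X → ℤ) → Prop))
    (h0 : Rk 0 = R)
    (hstep : ∀ k : ℕ, ∀ hk : k < N, ∀ x y : X → ℤ,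
      Rk (k + 1) x y ↔ (Rk k x y ∧ ∀ p ∈ P ⟨k, hk⟩,
        MvPolynomial.aeval (fun i => (x i : ℚ)) p =
          MvPolynomial.aeval (fun i => (y i : ℚ)) p))
    (hq : ∀ k : ℕ, ∀ hk : k < N, ∀ p ∈ P ⟨k, hk⟩, ∀ x y : X → ℤ, Rk k x y →
      MvPolynomial.aeval (fun i => (y i : ℚ)) p ≤ MvPolynomial.aeval (fun i => (x i : ℚ)) p ∧
      0 ≤ MvPolynomial.aeval (fun i => (x i : ℚ)) p)
    (hempty : ∀ x y : X → ℤ, ¬ Rk N x y) :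
    ¬ ∃ f : ℕ → (X → ℤ), ∀ i : ℕ, R (f i) (f (i + 1)) := by
  rintro ⟨f, hf⟩
  have key : ∀ k, k ≤ N → ∃ n, ∀ i, n ≤ i → Rk k (f i) (f (i + 1)) := by
    intro k
    induction k with
    | zero => exact fun _ => ⟨0, fun i _ => h0 ▸ hf i⟩
    | succ k ih =>
      intro hk
      obtain ⟨n, hn⟩ := ih (by omega)
      have hs : ∀ p ∈ P ⟨k, hk⟩, ∀ᶠ i in Filter.atTop,
          MvPolynomial.aeval (fun j => (f i j : ℚ)) p =
            MvPolynomial.aeval (fun j => (f (i + 1) j : ℚ)) p := by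
        intro p hp
        obtain ⟨d, hd, h⟩ := lex_denominator p
        rw [Filter.eventually_atTop]
        exact lex_stabilize (fun i => MvPolynomial.aeval (fun j => (f i j : ℚ)) p) d hd
          (fun i => h (f i)) n (fun i hi => hq k hk p hp _ _ (hn i hi))
      have hs' := (Filter.eventually_all_finset _).2 hs
      obtain ⟨m, hm⟩ := Filter.eventually_atTop.1 hs'
      refine ⟨max n m, fun i hi => (hstep k hk _ _).2 ⟨hn i ?_, hm i ?_⟩⟩
      · exact (le_max_left _ _).trans hi
      · exact (le_max_right _ _).trans hi
  obtain ⟨n, hn⟩ := key N le_rfl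
  exact hempty _ _ (hn n le_rfl)
end

section
/- Let n : ℕ and work in the ℚ-vector space ℚⁿ (functions Fin n → ℚ). For a finite set S ⊆ ℚⁿ, let cone(S) denote the set of all nonnegative rational conical combinations of elements of S (finite sums Σ λᵢ sᵢ with λᵢ ∈ ℚ, λᵢ ≥ 0, sᵢ ∈ S), and let conv(S) denote the convex hull of S over ℚ. Then convex polyhedra in V-representation are closed under intersection: for any finite sets R₁, V₁, R₂, V₂ ⊆ ℚⁿ, there exist finite sets R, V ⊆ ℚⁿ such that (cone(R₁) + conv(V₁)) ∩ (cone(R₂) + conv(V₂)) = cone(R) + conv(V), where + denotes the Minkowski sum {a + b : a ∈ A, b ∈ B}. -/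
open Pointwise

/-- The conical hull of a finite set `S` in ℚⁿ: all nonnegative rational
conical combinations of elements of `S`. -/
def coneOf {n : ℕ} (S : Finset (Fin n → ℚ)) : Set (Fin n → ℚ) :=
  {v | ∃ c : (Fin n → ℚ) → ℚ, (∀ s, 0 ≤ c s) ∧ v = ∑ s ∈ S, c s • s}

theorem mem_hull_finset {E : Type*} [AddCommGroup E] [Module ℚ E] (S : Finset E) (x : E) :
    x ∈ PointedCone.hull ℚ (S : Set E) ↔
      ∃ c : E → ℚ, (∀ s, 0 ≤ c s) ∧ x = ∑ s ∈ S, c s • s := by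
  classical
  constructor
  · intro h
    rw [PointedCone.hull, Submodule.mem_span_finset] at h
    obtain ⟨c, -, hc⟩ := h
    exact ⟨fun s => (c s : ℚ), fun s => (c s).2, hc.symm⟩
  · rintro ⟨c, hc, rfl⟩
    refine Submodule.sum_mem _ fun s hs => ?_
    exact PointedCone.smul_mem _ (hc s) (PointedCone.subset_hull hs)

/-- One step of the double description method. -/
theorem fg_inf_ker {E : Type*} [AddCommGroup E] [Module ℚ E] (C : PointedCone ℚ E)
    (hC : C.FG) (f : E →ₗ[ℚ] ℚ) :
    (C ⊓ PointedCone.ofSubmodule (LinearMap.ker f)).FG := by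
  classical
  obtain ⟨T, rfl⟩ := hC
  change Submodule.FG (PointedCone.hull ℚ (T : Set E) ⊓ _)
  set Z := T.filter (fun t => f t = 0) with hZ
  set P := T.filter (fun t => 0 < f t) with hP
  set N := T.filter (fun t => f t < 0) with hN
  set G : Finset E := Z ∪ (P ×ˢ N).image (fun q => f q.1 • q.2 + (- f q.2) • q.1) with hG
  refine ⟨G, le_antisymm ?_ ?_⟩
  · refine Submodule.span_le.2 ?_
    intro g hg
    simp only [hG, Finset.coe_union, Set.mem_union, Finset.mem_coe, Finset.mem_image,
      Finset.mem_product, Prod.exists] at hg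
    rcases hg with hg | ⟨p, q, ⟨hp, hq⟩, rfl⟩
    · simp only [hZ, Finset.mem_filter] at hg
      exact ⟨PointedCone.subset_hull hg.1, hg.2⟩
    · simp only [hP, hN, Finset.mem_filter] at hp hq
      refine ⟨Submodule.add_mem _ ?_ ?_, ?_⟩
      · exact PointedCone.smul_mem _ hp.2.le (PointedCone.subset_hull hq.1)
      · exact PointedCone.smul_mem _ (by linarith [hq.2]) (PointedCone.subset_hull hp.1)
      · change f _ = 0
        simp only [map_add, map_smul, smul_eq_mul]
        ring
  · rintro x ⟨hx, hfx⟩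
    change f x = 0 at hfx
    obtain ⟨c, hc, hxc⟩ := (mem_hull_finset T x).1 hx
    change x ∈ PointedCone.hull ℚ (G : Set E)
    have split : ∀ {M : Type _} [AddCommGroup M] (g : E → M), ∑ t ∈ T, g t =
        ∑ t ∈ Z, g t + ∑ t ∈ P, g t + ∑ t ∈ N, g t := by
      intro M _ g
      rw [hZ, hP, hN, Finset.sum_filter, Finset.sum_filter, Finset.sum_filter,
        ← Finset.sum_add_distrib, ← Finset.sum_add_distrib]
      refine Finset.sum_congr rfl fun t _ => ?_
      rcases lt_trichotomy (f t) 0 with h | h | h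
      · simp [h, h.ne, not_lt_of_gt h]
      · simp [h]
      · simp [h, h.ne', not_lt_of_gt h]
    have split' : ∀ (g : E → ℚ), ∑ t ∈ T, g t =
        ∑ t ∈ Z, g t + ∑ t ∈ P, g t + ∑ t ∈ N, g t := by
      intro g
      rw [hZ, hP, hN, Finset.sum_filter, Finset.sum_filter, Finset.sum_filter,
        ← Finset.sum_add_distrib, ← Finset.sum_add_distrib]
      refine Finset.sum_congr rfl fun t _ => ?_
      rcases lt_trichotomy (f t) 0 with h | h | h
      · simp [h, h.ne, not_lt_of_gt h]
      · simp [h]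
      · simp [h, h.ne', not_lt_of_gt h]
    set s := ∑ t ∈ P, c t * f t with hs
    have hZ0 : ∑ t ∈ Z, c t * f t = 0 :=
      Finset.sum_eq_zero fun t ht => by
        simp only [hZ, Finset.mem_filter] at ht
        rw [ht.2, mul_zero]
    have hsN : ∑ t ∈ N, c t * (- f t) = s := by
      rw [hxc, map_sum] at hfx
      simp only [map_smul, smul_eq_mul] at hfx
      rw [split', hZ0] at hfx
      simp only [mul_neg, Finset.sum_neg_distrib]
      linarith
    have hZmem : ∑ t ∈ Z, c t • t ∈ PointedCone.hull ℚ (G : Set E) :=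
      Submodule.sum_mem _ fun t ht => PointedCone.smul_mem _ (hc t)
        (PointedCone.subset_hull (by simp [hG, ht]))
    have hPnn : ∀ t ∈ P, 0 ≤ c t * f t := fun t ht => by
      simp only [hP, Finset.mem_filter] at ht
      exact mul_nonneg (hc t) ht.2.le
    have hNnn : ∀ t ∈ N, 0 ≤ c t * (- f t) := fun t ht => by
      simp only [hN, Finset.mem_filter] at ht
      exact mul_nonneg (hc t) (by linarith [ht.2])
    have hs0 : 0 ≤ s := Finset.sum_nonneg hPnn
    have key : s • (∑ t ∈ P, c t • t + ∑ t ∈ N, c t • t) =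
        ∑ p ∈ P, ∑ q ∈ N, (c p * c q) • (f p • q + (- f q) • p) := by
      have h1 : s • ∑ t ∈ N, c t • t = ∑ p ∈ P, ∑ q ∈ N, (c p * c q) • (f p • q) := by
        rw [hs, Finset.sum_smul]
        refine Finset.sum_congr rfl fun p _ => ?_
        rw [Finset.smul_sum]
        refine Finset.sum_congr rfl fun q _ => ?_
        simp only [smul_smul]
        congr 1
        ring
      have h2 : s • ∑ t ∈ P, c t • t = ∑ p ∈ P, ∑ q ∈ N, (c p * c q) • ((- f q) • p) := by
        rw [← hsN, Finset.smul_sum]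
        refine Finset.sum_congr rfl fun p _ => ?_
        rw [Finset.sum_smul]
        refine Finset.sum_congr rfl fun q _ => ?_
        simp only [smul_smul]
        congr 1
        ring
      rw [smul_add, h1, h2, add_comm]
      simp only [smul_add, Finset.sum_add_distrib]
    rw [hxc, split, add_assoc]
    refine Submodule.add_mem _ hZmem ?_
    rcases hs0.eq_or_lt with h0 | hpos
    · have hcP : ∀ t ∈ P, c t = 0 := fun t ht => by
        have := (Finset.sum_eq_zero_iff_of_nonneg hPnn).1 (hs ▸ h0.symm) t ht
        simp only [hP, Finset.mem_filter] at ht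
        exact (mul_eq_zero.1 this).resolve_right ht.2.ne'
      have hcN : ∀ t ∈ N, c t = 0 := fun t ht => by
        have := (Finset.sum_eq_zero_iff_of_nonneg hNnn).1 (hsN.trans h0.symm) t ht
        simp only [hN, Finset.mem_filter] at ht
        exact (mul_eq_zero.1 this).resolve_right (neg_ne_zero.2 ht.2.ne)
      rw [Finset.sum_eq_zero fun t ht => by rw [hcP t ht, zero_smul],
        Finset.sum_eq_zero fun t ht => by rw [hcN t ht, zero_smul], add_zero]
      exact Submodule.zero_mem _
    · rw [← inv_smul_smul₀ hpos.ne' (∑ t ∈ P, c t • t + ∑ t ∈ N, c t • t), key]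
      refine PointedCone.smul_mem _ (inv_nonneg.2 hs0) ?_
      refine Submodule.sum_mem _ fun p hp => Submodule.sum_mem _ fun q hq => ?_
      refine PointedCone.smul_mem _ (mul_nonneg (hc p) (hc q)) (PointedCone.subset_hull ?_)
      simp only [hG, Finset.coe_union, Set.mem_union, Finset.mem_coe]
      exact Or.inr (Finset.mem_image.2 ⟨(p, q), Finset.mem_product.2 ⟨hp, hq⟩, rfl⟩)

theorem fg_inf_kers {E ι : Type*} [AddCommGroup E] [Module ℚ E] (C : PointedCone ℚ E)
    (hC : C.FG) (f : ι → E →ₗ[ℚ] ℚ) (s : Finset ι) :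
    ∃ D : PointedCone ℚ E, D.FG ∧ ∀ x, x ∈ D ↔ x ∈ C ∧ ∀ i ∈ s, f i x = 0 := by
  classical
  induction s using Finset.induction_on with
  | empty => exact ⟨C, hC, by simp⟩
  | insert a s _ ih =>
    obtain ⟨D, hD, h⟩ := ih
    refine ⟨_, fg_inf_ker D hD (f a), fun x => ?_⟩
    rw [Submodule.mem_inf, h]
    change (_ ∧ f a x = 0) ↔ _
    simp only [Finset.mem_insert, forall_eq_or_imp]
    tauto

theorem fg_inter {n : ℕ} (C D : PointedCone ℚ ((Fin n → ℚ) × ℚ)) (hC : C.FG) (hD : D.FG) :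
    (C ⊓ D).FG := by
  let E := (Fin n → ℚ) × ℚ
  let d : E × E →ₗ[ℚ] E := LinearMap.fst ℚ E E - LinearMap.snd ℚ E E
  let f : Option (Fin n) → E × E →ₗ[ℚ] ℚ := fun o => match o with
    | none => LinearMap.snd ℚ _ _ ∘ₗ d
    | some i => LinearMap.proj i ∘ₗ LinearMap.fst ℚ _ _ ∘ₗ d
  obtain ⟨K, hK, h⟩ := fg_inf_kers (E := E × E) (Submodule.prod C D) (Submodule.FG.prod hC hD) f
    Finset.univ
  have : C ⊓ D = PointedCone.map (LinearMap.fst ℚ E E) K := by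
    ext x
    rw [Submodule.mem_inf, PointedCone.mem_map]
    constructor
    · rintro ⟨h1, h2⟩
      refine ⟨(x, x), (h _).2 ⟨⟨h1, h2⟩, ?_⟩, rfl⟩
      rintro (_ | i) _ <;> simp [f, d]
    · rintro ⟨⟨a, b⟩, hab, rfl⟩
      obtain ⟨⟨h1, h2⟩, h3⟩ := (h _).1 hab
      have : a = b := by
        refine Prod.ext (funext fun i => ?_) ?_
        · have := h3 (some i) (Finset.mem_univ _)
          exact sub_eq_zero.1 this
        · have := h3 none (Finset.mem_univ _)
          exact sub_eq_zero.1 this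
      subst this
      exact ⟨h1, h2⟩
  rw [this]
  exact Submodule.FG.map _ hK

/-- Homogenisation of a polyhedron. -/
def homog {n : ℕ} (R V : Set (Fin n → ℚ)) : PointedCone ℚ ((Fin n → ℚ) × ℚ) :=
  PointedCone.hull ℚ ((fun r => (r, (0 : ℚ))) '' R ∪ (fun v => (v, (1 : ℚ))) '' V)

theorem mem_homog {n : ℕ} (R V : Finset (Fin n → ℚ)) (x : Fin n → ℚ) :
    (x, (1 : ℚ)) ∈ homog (R : Set (Fin n → ℚ)) V ↔
      x ∈ coneOf R + convexHull ℚ (V : Set (Fin n → ℚ)) := by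
  constructor
  · intro h
    have main : ∀ y ∈ homog (R : Set (Fin n → ℚ)) V,
        ∃ r ∈ PointedCone.hull ℚ (R : Set (Fin n → ℚ)), y = (r, 0) ∨
          ∃ t : ℚ, 0 < t ∧ ∃ z ∈ convexHull ℚ (V : Set (Fin n → ℚ)), y = (r + t • z, t) := by
      intro y hy
      induction hy using Submodule.span_induction with
      | mem y hy =>
        rcases hy with ⟨r, hr, rfl⟩ | ⟨v, hv, rfl⟩
        · exact ⟨r, PointedCone.subset_hull hr, Or.inl rfl⟩
        · exact ⟨0, Submodule.zero_mem _, Or.inr ⟨1, one_pos, v, subset_convexHull ℚ _ hv,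
            by simp⟩⟩
      | zero => exact ⟨0, Submodule.zero_mem _, Or.inl rfl⟩
      | add a b _ _ iha ihb =>
        obtain ⟨r, hr, ha⟩ := iha
        obtain ⟨r', hr', hb⟩ := ihb
        refine ⟨r + r', Submodule.add_mem _ hr hr', ?_⟩
        rcases ha with rfl | ⟨t, ht, z, hz, rfl⟩ <;> rcases hb with rfl | ⟨t', ht', z', hz', rfl⟩
        · left; simp
        · exact Or.inr ⟨t', ht', z', hz', by simp [add_assoc]⟩
        · exact Or.inr ⟨t, ht, z, hz, by simp [add_right_comm]⟩
        · have hpos : 0 < t + t' := add_pos ht ht'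
          refine Or.inr ⟨t + t', hpos, (t / (t + t')) • z + (t' / (t + t')) • z', ?_, ?_⟩
          · exact convex_convexHull ℚ _ hz hz' (by positivity) (by positivity)
              (by field_simp)
          · refine Prod.ext ?_ rfl
            simp only [Prod.fst_add, smul_add, smul_smul, mul_div_cancel₀ _ hpos.ne']
            abel
      | smul a y _ ih =>
        obtain ⟨r, hr, ha⟩ := ih
        refine ⟨a • r, Submodule.smul_mem _ _ hr, ?_⟩
        rcases ha with rfl | ⟨t, ht, z, hz, rfl⟩
        · left; simp
        · rcases eq_or_ne a 0 with rfl | h0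
          · left; simp only [zero_smul]; rfl
          · right
            have ha : 0 < (a : ℚ) := lt_of_le_of_ne a.2 fun h => h0 (Subtype.ext h.symm)
            refine ⟨(a : ℚ) * t, mul_pos ha ht, z, hz, ?_⟩
            refine Prod.ext ?_ rfl
            change (a : ℚ) • (r + t • z) = (a : ℚ) • r + ((a : ℚ) * t) • z
            rw [smul_add, smul_smul]
    obtain ⟨r, hr, h | ⟨t, ht, z, hz, h⟩⟩ := main _ h
    · simp at h
    · obtain ⟨h1, rfl⟩ := Prod.ext_iff.1 h
      refine Set.mem_add.2 ⟨r, (mem_hull_finset R r).1 hr, z, hz, ?_⟩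
      simpa using h1.symm
  · intro h
    obtain ⟨r, hr, v, hv, rfl⟩ := Set.mem_add.1 h
    have h1 : (r, (0 : ℚ)) ∈ homog (R : Set (Fin n → ℚ)) V := by
      have : PointedCone.hull ℚ (R : Set (Fin n → ℚ)) ≤
          PointedCone.comap (LinearMap.inl ℚ (Fin n → ℚ) ℚ) (homog (R : Set (Fin n → ℚ)) V) := by
        refine Submodule.span_le.2 fun r hr => ?_
        exact PointedCone.subset_hull (Or.inl ⟨r, hr, rfl⟩)
      exact this ((mem_hull_finset R r).2 hr)
    have h2 : (v, (1 : ℚ)) ∈ homog (R : Set (Fin n → ℚ)) V := by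
      refine convexHull_min (s := (V : Set (Fin n → ℚ)))
        (t := {v | (v, (1 : ℚ)) ∈ homog (R : Set (Fin n → ℚ)) V}) ?_ ?_ hv
      · intro v hv
        exact PointedCone.subset_hull (Or.inr ⟨v, hv, rfl⟩)
      · intro a ha b hb s t hs ht hst
        have := (homog (R : Set (Fin n → ℚ)) V).convex ha hb hs ht hst
        simpa [hst] using this
    simpa using Submodule.add_mem _ h1 h2

theorem homog_fg {n : ℕ} (R V : Finset (Fin n → ℚ)) :
    (homog (R : Set (Fin n → ℚ)) V).FG :=
  Submodule.fg_span ((R.finite_toSet.image _).union (V.finite_toSet.image _))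

theorem homog_nonneg {n : ℕ} (R V : Set (Fin n → ℚ)) (y) (hy : y ∈ homog R V) : 0 ≤ y.2 := by
  have : homog R V ≤ PointedCone.comap (LinearMap.snd ℚ (Fin n → ℚ) ℚ)
      (PointedCone.positive ℚ ℚ) := by
    refine Submodule.span_le.2 ?_
    rintro _ (⟨r, hr, rfl⟩ | ⟨r, hr, rfl⟩) <;> simp
  simpa using this hy

theorem eq_homog {n : ℕ} (C : PointedCone ℚ ((Fin n → ℚ) × ℚ)) (hC : C.FG)
    (hnn : ∀ y ∈ C, 0 ≤ y.2) :
    ∃ R V : Finset (Fin n → ℚ), C = homog (R : Set (Fin n → ℚ)) V := by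
  classical
  obtain ⟨T, rfl⟩ := hC
  refine ⟨(T.filter fun y => y.2 = 0).image Prod.fst,
    (T.filter fun y => 0 < y.2).image fun y => y.2⁻¹ • y.1, le_antisymm ?_ ?_⟩
  · refine Submodule.span_le.2 fun y hy => ?_
    rcases (hnn y (Submodule.subset_span hy)).eq_or_lt with h | h
    · refine PointedCone.subset_hull (Or.inl ⟨y.1, ?_, Prod.ext rfl h⟩)
      exact Finset.mem_coe.2 (Finset.mem_image.2 ⟨y, Finset.mem_filter.2 ⟨hy, h.symm⟩, rfl⟩)
    · have : y = y.2 • (y.2⁻¹ • y.1, (1 : ℚ)) := by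
        refine Prod.ext ?_ ?_
        · simp [smul_smul, h.ne']
        · simp
      rw [this]
      refine PointedCone.smul_mem _ h.le (PointedCone.subset_hull (Or.inr ⟨_, ?_, rfl⟩))
      exact Finset.mem_coe.2 (Finset.mem_image.2 ⟨y, Finset.mem_filter.2 ⟨hy, h⟩, rfl⟩)
  · refine Submodule.span_le.2 ?_
    rintro _ (⟨r, hr, rfl⟩ | ⟨r, hr, rfl⟩)
    · obtain ⟨y, hy, rfl⟩ := Finset.mem_image.1 (Finset.mem_coe.1 hr)
      obtain ⟨hyT, h⟩ := Finset.mem_filter.1 hy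
      have : (y.1, (0 : ℚ)) = y := Prod.ext rfl h.symm
      change (y.1, (0 : ℚ)) ∈ _
      rw [this]
      exact Submodule.subset_span hyT
    · obtain ⟨y, hy, rfl⟩ := Finset.mem_image.1 (Finset.mem_coe.1 hr)
      obtain ⟨hyT, h⟩ := Finset.mem_filter.1 hy
      have : (y.2⁻¹ • y.1, (1 : ℚ)) = y.2⁻¹ • y := Prod.ext rfl (by simp [h.ne'])
      change (y.2⁻¹ • y.1, (1 : ℚ)) ∈ PointedCone.hull ℚ (T : Set ((Fin n → ℚ) × ℚ))
      rw [this]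
      exact PointedCone.smul_mem _ (inv_nonneg.2 h.le) (PointedCone.subset_hull hyT)

/-- Convex polyhedra in V-representation are closed under intersection. -/
theorem polyhedra_Vrep_closed_under_intersection
    (n : ℕ) (R₁ V₁ R₂ V₂ : Finset (Fin n → ℚ)) :
    ∃ R V : Finset (Fin n → ℚ),
      (coneOf R₁ + convexHull ℚ (V₁ : Set (Fin n → ℚ))) ∩
        (coneOf R₂ + convexHull ℚ (V₂ : Set (Fin n → ℚ))) =
      coneOf R + convexHull ℚ (V : Set (Fin n → ℚ)) := by
  obtain ⟨R, V, h⟩ := eq_homog _ (fg_inter _ _ (homog_fg R₁ V₁) (homog_fg R₂ V₂))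
    (fun y hy => homog_nonneg _ _ y hy.1)
  refine ⟨R, V, ?_⟩
  ext x
  rw [Set.mem_inter_iff, ← mem_homog, ← mem_homog, ← mem_homog, ← h, Submodule.mem_inf]
end
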